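/- arXiv:2508.01238 — 2 statements merged into one kernel-verified Lean document; each statement's English description precedes it below -/
import Mathlib

section
/- Edge trace identity for the linearized Cotton–York operator: for every C^∞ matrix field τ : ℝ³ → ℝ^{3×3} with symmetric values and every choice of pairwise orthogonal unit vectors t, m, n ∈ ℝ³ with t' := n × m, the identity ∂_t(tᵀ (tr2cott(τ)) m) + mᵀ (div_f(tr2cott(τ))) = m · tre2(τ) + ∂_t ∂_t (t'ᵀ τ n) holds at every point of ℝ³. -/
noncomputable section

open Matrix

/-- Vectors in ℝ³. -/
abbrev V3 := Fin 3 → ℝ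
/-- 3×3 real matrices. -/
abbrev M3 := Matrix (Fin 3) (Fin 3) ℝ

/-- Partial derivative ∂ᵢ of a scalar field. -/
def pd (i : Fin 3) (f : V3 → ℝ) : V3 → ℝ :=
  fun x => fderiv ℝ f x (Pi.single i 1)

/-- Gradient matrix of a vector field: (grad v)_{ij} = ∂ⱼ vᵢ. -/
def vgrad (v : V3 → V3) : V3 → M3 :=
  fun x => Matrix.of fun i j => pd j (fun y => v y i) x

/-- Divergence of a vector field. -/
def vdiv (v : V3 → V3) : V3 → ℝ :=
  fun x => ∑ i, pd i (fun y => v y i) x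

/-- Cross product on ℝ³. -/
def cross (a b : V3) : V3 :=
  fun i => a (i + 1) * b (i + 2) - a (i + 2) * b (i + 1)

/-- Curl of a vector field. -/
def vcurl (v : V3 → V3) : V3 → V3 :=
  fun x i => pd (i + 1) (fun y => v y (i + 2)) x - pd (i + 2) (fun y => v y (i + 1)) x

/-- Row-wise curl of a matrix field. -/
def mcurl (τ : V3 → M3) : V3 → M3 :=
  fun x => Matrix.of fun i j =>
    pd (j + 1) (fun y => τ y i (j + 2)) x - pd (j + 2) (fun y => τ y i (j + 1)) x

/-- Row-wise divergence of a matrix field. -/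
def mdiv (τ : V3 → M3) : V3 → V3 :=
  fun x i => ∑ j, pd j (fun y => τ y i j) x

/-- Symmetric part of a matrix. -/
def msym (A : M3) : M3 := (1 / 2 : ℝ) • (A + Aᵀ)

/-- Deviatoric (trace-free) part of a matrix. -/
def devm (A : M3) : M3 := A - ((1 / 3 : ℝ) * A.trace) • (1 : M3)

/-- The skew-symmetric matrix associated to a vector: mskw(ω) y = ω × y. -/
def mskw (w : V3) : M3 := !![0, -w 2, w 1; w 2, 0, -w 0; -w 1, w 0, 0]

/-- vskw(A) := mskw⁻¹(skw A). -/
def vskw (A : M3) : V3 :=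
  (1 / 2 : ℝ) • ![A 2 1 - A 1 2, A 0 2 - A 2 0, A 1 0 - A 0 1]

/-- S⁻¹(A) := Aᵀ − (1/2)(tr A)I. -/
def Sinv (A : M3) : M3 := Aᵀ - ((1 / 2 : ℝ) * A.trace) • (1 : M3)

/-- S(A) := Aᵀ − (tr A)I. -/
def Sop (A : M3) : M3 := Aᵀ - A.trace • (1 : M3)

/-- Incompatibility operator inc τ := curl (S⁻¹ (curl τ)). -/
def inc (τ : V3 → M3) : V3 → M3 := mcurl fun x => Sinv (mcurl τ x)

/-- Linearized Cotton–York operator cott τ := curl (S⁻¹ (inc τ)). -/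
def cott (τ : V3 → M3) : V3 → M3 := mcurl fun x => Sinv (inc τ x)

/-- Hessian matrix of a scalar field. -/
def hess (u : V3 → ℝ) : V3 → M3 :=
  fun x => Matrix.of fun i j => pd i (pd j u) x

/-- Euclidean dot product on ℝ³. -/
def dotp (a b : V3) : ℝ := ∑ i, a i * b i

/-- Smoothness of a vector field (componentwise C^∞). -/
def SmoothV (v : V3 → V3) : Prop := ∀ i, ContDiff ℝ (⊤ : ℕ∞) fun x => v x i

/-- Smoothness of a matrix field (entrywise C^∞). -/
def SmoothM (τ : V3 → M3) : Prop := ∀ i j, ContDiff ℝ (⊤ : ℕ∞) fun x => τ x i j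

/-- Conformal Killing fields. -/
def CK (v : V3 → V3) : Prop :=
  ∃ (a c d : V3) (b : ℝ), ∀ x,
    v x = dotp x x • a - (2 * dotp a x) • x + b • x + cross c x + d

/-- Rigid motions. -/
def RM (v : V3 → V3) : Prop := ∃ a b : V3, ∀ x, v x = cross a x + b

/-- Lowest-order Raviart–Thomas fields. -/
def RT (v : V3 → V3) : Prop := ∃ (a : V3) (b : ℝ), ∀ x, v x = a + b • x

/-- Polynomial scalar functions of total degree at most k. -/
def PolyLe (k : ℕ) (f : V3 → ℝ) : Prop :=
  ∃ p : MvPolynomial (Fin 3) ℝ, p.totalDegree ≤ k ∧ ∀ x, f x = MvPolynomial.eval x p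

/-- Matrix fields with entries in P_k and values symmetric traceless. -/
def PolyLeST (k : ℕ) (τ : V3 → M3) : Prop :=
  (∀ i j, PolyLe k fun x => τ x i j) ∧ (∀ x, (τ x)ᵀ = τ x) ∧ ∀ x, (τ x).trace = 0


/-- Directional derivative of a scalar field along a fixed vector w. -/
def pdir (w : V3) (f : V3 → ℝ) : V3 → ℝ := fun x => fderiv ℝ f x w

/-- Entrywise directional derivative of a vector field. -/
def pdirV (w : V3) (v : V3 → V3) : V3 → V3 := fun x i => pdir w (fun y => v y i) x

/-- Entrywise directional derivative of a matrix field. -/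
def pdirM (w : V3) (A : V3 → M3) : V3 → M3 :=
  fun x => Matrix.of fun i j => pdir w (fun y => A y i j) x

/-- Column-wise curl ∇ × A: the j-th column is the curl of the j-th column of A. -/
def colcurl (A : V3 → M3) : V3 → M3 :=
  fun x => Matrix.of fun i j =>
    pd (i + 1) (fun y => A y (i + 2) j) x - pd (i + 2) (fun y => A y (i + 1) j) x

/-- Gradient of a scalar field as a vector field. -/
def gradS (f : V3 → ℝ) : V3 → V3 := fun x i => pd i f x

/-- Projection matrix Π := I − n nᵀ. -/
def Pm (n : V3) : M3 := 1 - Matrix.vecMulVec n n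

/-- Row-wise cross product of a matrix with a vector. -/
def mcrossv (A : M3) (w : V3) : M3 := Matrix.of fun i => cross (A i) w

/-- Surface gradient grad_f w := (grad w) Π. -/
def gradf (n : V3) (w : V3 → V3) : V3 → M3 := fun x => vgrad w x * Pm n

/-- Surface deformation def_f w := sym (grad_f w). -/
def deff (n : V3) (w : V3 → V3) : V3 → M3 := fun x => msym (gradf n w x)

/-- Surface divergence of a matrix field: div_f A := (∂_t A) t + (∂_m A) m. -/
def divfM (t m : V3) (A : V3 → M3) : V3 → V3 :=
  fun x => (pdirM t A x).mulVec t + (pdirM m A x).mulVec m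

/-- Surface divergence of a vector field: div_f w := t·∂_t w + m·∂_m w. -/
def divfV (t m : V3) (w : V3 → V3) : V3 → ℝ :=
  fun x => dotp t (pdirV t w x) + dotp m (pdirV m w x)

/-- Surface deviatoric part dev_f A := ΠAΠ − (1/2) tr(ΠAΠ) Π. -/
def devf (n : V3) (A : M3) : M3 :=
  Pm n * A * Pm n - ((1 / 2 : ℝ) * (Pm n * A * Pm n).trace) • Pm n

/-- tr2inc(τ) := 2 def_f(Πτn) − Π(∂_n τ)Π. -/
def tr2inc (n : V3) (τ : V3 → M3) : V3 → M3 :=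
  fun x => (2 : ℝ) • deff n (fun y => (Pm n * τ y).mulVec n) x - Pm n * pdirM n τ x * Pm n

/-- tr1cott(τ) := sym((Πτ) × n). -/
def tr1cott (n : V3) (τ : V3 → M3) : V3 → M3 :=
  fun x => msym (mcrossv (Pm n * τ x) n)

/-- tr2cott(τ) := sym(tr2inc(τ) × n). -/
def tr2cott (n : V3) (τ : V3 → M3) : V3 → M3 :=
  fun x => msym (mcrossv (tr2inc n τ x) n)

/-- tr3cott(τ) := dev_f(tr2inc(sym curl τ)). -/
def tr3cott (n : V3) (τ : V3 → M3) : V3 → M3 :=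
  fun x => devf n (tr2inc n (fun y => msym (mcurl τ y)) x)

/-- tre2(τ) := 2(∂_t(sym curl τ))t − ∇(tᵀ(curl τ)t). -/
def tre2 (t : V3) (τ : V3 → M3) : V3 → V3 :=
  fun x => (2 : ℝ) • (pdirM t (fun y => msym (mcurl τ y)) x).mulVec t
    - gradS (fun y => dotp t ((mcurl τ y).mulVec t)) x

/-- tre3(τ) := −tᵀ(∇ × (sym curl τ))t − (1/2)∂_t(t·div τ). -/
def tre3 (t : V3) (τ : V3 → M3) : V3 → ℝ :=
  fun x => -dotp t ((colcurl (fun y => msym (mcurl τ y)) x).mulVec t)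
    - (1 / 2 : ℝ) * pdir t (fun y => dotp t (mdiv τ y)) x

/-! Let `s = t · (m × n) = ±1`. Rewriting the surface components of `tr2cott τ` through
`aᵀ (curl τ)(p × q) = ∂_p (aᵀ τ q) - ∂_q (aᵀ τ p)` gives two identities of first order in `τ`:
`tᵀ (tr2cott τ) m = mᵀ (sym curl τ) t + (s / 2) (∂_m (mᵀ τ n) - ∂_t (tᵀ τ n))` and
`mᵀ (tr2cott τ) m = - tᵀ (curl τ) t - s ∂_t (mᵀ τ n)`.
In `2 ∂_t (tᵀ (tr2cott τ) m) + ∂_m (mᵀ (tr2cott τ) m)` the curl terms form `m · tre2 τ`, the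
mixed derivatives of `mᵀ τ n` cancel because they commute, and `- s ∂_t ∂_t (tᵀ τ n)` remains, in
which `- s t = n × m`. -/

theorem cross_eq_crossProduct (a b : V3) : cross a b = a ⨯₃ b := by
  funext i
  fin_cases i <;> rfl

section Frame

/-- An orthonormal frame of ℝ³, of either orientation: along the edge in question, `t` is the
edge tangent, `m` the conormal and `n` the normal of the face. -/
structure IsOrthonormalFrame (t m n : V3) : Prop where
  dot_tt : t ⬝ᵥ t = 1
  dot_mm : m ⬝ᵥ m = 1
  dot_nn : n ⬝ᵥ n = 1
  dot_tm : t ⬝ᵥ m = 0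
  dot_tn : t ⬝ᵥ n = 0
  dot_mn : m ⬝ᵥ n = 0

/-- The orientation of a frame, encoded as its triple product; it is `±1` for an orthonormal
frame. -/
def orientation (t m n : V3) : ℝ := t ⬝ᵥ m ⨯₃ n

theorem crossProduct_eq_orientation_smul {t m n : V3} (ht : t ⬝ᵥ t = 1) (htm : t ⬝ᵥ m = 0)
    (htn : t ⬝ᵥ n = 0) : m ⨯₃ n = orientation t m n • t := by
  have parallel : t ⨯₃ (m ⨯₃ n) = 0 := by
    rw [cross_cross_eq_smul_sub_smul', htn, dotProduct_comm m t, htm, zero_smul, zero_smul,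
      sub_zero]
  have expand := cross_cross_eq_smul_sub_smul' t t (m ⨯₃ n)
  rw [parallel, map_zero, ht, one_smul] at expand
  exact (sub_eq_zero.mp expand.symm).symm

namespace IsOrthonormalFrame

variable {t m n : V3} (frame : IsOrthonormalFrame t m n)
include frame

theorem crossProduct_mn : m ⨯₃ n = orientation t m n • t :=
  crossProduct_eq_orientation_smul frame.dot_tt frame.dot_tm frame.dot_tn

theorem crossProduct_nm : n ⨯₃ m = -orientation t m n • t := by
  rw [← cross_anticomm, frame.crossProduct_mn, neg_smul]

theorem crossProduct_nt : n ⨯₃ t = orientation t m n • m := by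
  rw [orientation, triple_product_permutation]
  exact crossProduct_eq_orientation_smul frame.dot_mm frame.dot_mn
    ((dotProduct_comm m t).trans frame.dot_tm)

theorem orientation_mul_self : orientation t m n * orientation t m n = 1 := by
  have h := cross_dot_cross m n m n
  rw [frame.crossProduct_mn, dotProduct_comm n m] at h
  simpa [frame.dot_tt, frame.dot_mm, frame.dot_nn, frame.dot_mn] using h

theorem eq_orientation_smul_crossProduct_mn : t = orientation t m n • m ⨯₃ n := by
  rw [frame.crossProduct_mn, smul_smul, frame.orientation_mul_self, one_smul]

theorem eq_orientation_smul_crossProduct_nt : m = orientation t m n • n ⨯₃ t := by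
  rw [frame.crossProduct_nt, smul_smul, frame.orientation_mul_self, one_smul]

end IsOrthonormalFrame

end Frame

section DirectionalDerivative

theorem pdir_eq_dotProduct_gradS (w : V3) (f : V3 → ℝ) (x : V3) : pdir w f x = w ⬝ᵥ gradS f x := by
  unfold pdir
  conv_lhs => rw [pi_eq_sum_univ' w]
  simp [gradS, pd, dotProduct]

theorem vgrad_mulVec (v : V3 → V3) (b x : V3) : vgrad v x *ᵥ b = pdirV b v x := by
  funext i
  exact (dotProduct_comm _ _).trans (pdir_eq_dotProduct_gradS b _ x).symm

theorem mcurl_mulVec_crossProduct (τ : V3 → M3) (p q x : V3) :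
    mcurl τ x *ᵥ (p ⨯₃ q) = pdirM p τ x *ᵥ q - pdirM q τ x *ᵥ p := by
  funext i
  simp [mulVec, dotProduct, mcurl, pdirM, cross_apply, pdir_eq_dotProduct_gradS, gradS,
    Fin.sum_univ_three]
  ring

variable {f g : V3 → ℝ} {x : V3}

theorem pdir_add (w : V3) (hf : DifferentiableAt ℝ f x) (hg : DifferentiableAt ℝ g x) :
    pdir w (fun y => f y + g y) x = pdir w f x + pdir w g x := by
  simp [pdir, fderiv_fun_add hf hg]

theorem pdir_sub (w : V3) (hf : DifferentiableAt ℝ f x) (hg : DifferentiableAt ℝ g x) :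
    pdir w (fun y => f y - g y) x = pdir w f x - pdir w g x := by
  simp [pdir, fderiv_fun_sub hf hg]

theorem pdir_neg (w : V3) (f : V3 → ℝ) (x : V3) :
    pdir w (fun y => -f y) x = -pdir w f x := by
  simp [pdir, fderiv_fun_neg]

theorem pdir_const_mul (w : V3) (c : ℝ) (hf : DifferentiableAt ℝ f x) :
    pdir w (fun y => c * f y) x = c * pdir w f x := by
  simp [pdir, fderiv_const_mul hf]

theorem pdir_dotProduct (w a : V3) {v : V3 → V3}
    (hv : ∀ i, DifferentiableAt ℝ (fun y => v y i) x) :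
    pdir w (fun y => a ⬝ᵥ v y) x = a ⬝ᵥ pdirV w v x := by
  simp [pdir, pdirV, dotProduct, fderiv_fun_sum fun i _ => (hv i).const_mul (a i),
    fderiv_const_mul (hv _)]

theorem pdir_comm (u w : V3) (hf : ContDiffAt ℝ 2 f x) :
    pdir u (pdir w f) x = pdir w (pdir u f) x := by
  have second (a b : V3) : pdir a (pdir b f) x = fderiv ℝ (fderiv ℝ f) x a b := by
    have hdf : DifferentiableAt ℝ (fderiv ℝ f) x :=
      (hf.fderiv_right (m := 1) (by norm_num)).differentiableAt (by norm_num)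
    unfold pdir
    simp [fderiv_clm_apply hdf (differentiableAt_const b)]
  rw [second, second]
  exact (hf.isSymmSndFDerivAt (by simp)) u w

theorem contDiff_pdir {k : WithTop ℕ∞} (w : V3) (hf : ContDiff ℝ (k + 1) f) :
    ContDiff ℝ k (pdir w f) :=
  (hf.fderiv_right le_rfl).clm_apply contDiff_const

end DirectionalDerivative

section Component

/-- The scalar field `aᵀ A b`, the component of the matrix field `A` along fixed vectors `a`
and `b`. -/
def component (A : V3 → M3) (a b : V3) : V3 → ℝ := fun x => a ⬝ᵥ A x *ᵥ b

variable (A : V3 → M3) (a b x : V3)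

theorem component_smul_right (s : ℝ) : component A a (s • b) x = s * component A a b x := by
  simp [component, mulVec_smul]

theorem component_comm_of_transpose_eq {A : V3 → M3} (hA : ∀ y, (A y)ᵀ = A y) :
    component A a b = component A b a := by
  funext y
  rw [component, component, dotProduct_mulVec, ← mulVec_transpose, hA, dotProduct_comm]

theorem transpose_msym (B : M3) : (msym B)ᵀ = msym B := by
  simp [msym, add_comm]

theorem component_msym :
    component (fun y => msym (A y)) a b x = (component A a b x + component A b a x) / 2 := by
  have swap : a ⬝ᵥ (A x)ᵀ *ᵥ b = b ⬝ᵥ A x *ᵥ a := by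
    rw [mulVec_transpose, dotProduct_comm, dotProduct_mulVec]
  simp only [component, msym, smul_mulVec, add_mulVec, dotProduct_smul, dotProduct_add, swap,
    smul_eq_mul]
  ring

theorem mcrossv_mulVec (B : M3) (n : V3) : mcrossv B n *ᵥ b = B *ᵥ (n ⨯₃ b) := by
  funext i
  simp only [mulVec, mcrossv, of_apply, cross_eq_crossProduct]
  rw [dotProduct_comm, triple_product_permutation]

variable {A x}

theorem pdir_component (w : V3) (hA : ∀ i j, DifferentiableAt ℝ (fun y => A y i j) x) :
    pdir w (component A a b) x = component (pdirM w A) a b x := by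
  have row (i : Fin 3) : (fun y => (A y *ᵥ b) i) = fun y => b ⬝ᵥ A y i :=
    funext fun y => dotProduct_comm _ _
  have column : pdirV w (fun y => A y *ᵥ b) x = pdirM w A x *ᵥ b := by
    funext i
    rw [pdirV, row, pdir_dotProduct w b (hA i), dotProduct_comm]
    rfl
  have hrow (i : Fin 3) : DifferentiableAt ℝ (fun y => (A y *ᵥ b) i) x := by
    have := hA i
    simp only [mulVec, dotProduct]
    fun_prop
  rw [component, ← column, ← pdir_dotProduct w a hrow]
  rfl

theorem component_mcurl (p q : V3) (hA : ∀ i j, DifferentiableAt ℝ (fun y => A y i j) x) :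
    component (mcurl A) a (p ⨯₃ q) x =
      pdir p (component A a q) x - pdir q (component A a p) x := by
  rw [component, mcurl_mulVec_crossProduct, dotProduct_sub, pdir_component a q p hA,
    pdir_component a p q hA]
  rfl

theorem dotProduct_divfM (t m : V3) (hA : ∀ i j, DifferentiableAt ℝ (fun y => A y i j) x) :
    a ⬝ᵥ divfM t m A x = pdir t (component A a t) x + pdir m (component A a m) x := by
  rw [divfM, dotProduct_add, pdir_component a t t hA, pdir_component a m m hA]
  rfl

theorem dotProduct_tre2 (t : V3)
    (hA : ∀ i j, DifferentiableAt ℝ (fun y => msym (mcurl A y) i j) x) :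
    a ⬝ᵥ tre2 t A x = 2 * pdir t (component (fun y => msym (mcurl A y)) a t) x
      - pdir a (component (mcurl A) t t) x := by
  rw [tre2, dotProduct_sub, ← pdir_eq_dotProduct_gradS, dotProduct_smul, smul_eq_mul,
    pdir_component a t t hA]
  rfl

end Component

section SurfaceTraces

variable {n : V3}

theorem Pm_mulVec_of_orthogonal {b : V3} (hb : b ⬝ᵥ n = 0) : Pm n *ᵥ b = b := by
  simp [Pm, sub_mulVec, vecMulVec_mulVec, dotProduct_comm n b, hb]

theorem dotProduct_Pm_mulVec_of_orthogonal {a : V3} (ha : a ⬝ᵥ n = 0) (v : V3) :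
    a ⬝ᵥ Pm n *ᵥ v = a ⬝ᵥ v := by
  simp [Pm, sub_mulVec, vecMulVec_mulVec, dotProduct_sub, ha]

variable {τ : V3 → M3} {x : V3}

theorem component_gradf (hτ : ∀ i j, DifferentiableAt ℝ (fun y => τ y i j) x) {a b : V3}
    (ha : a ⬝ᵥ n = 0) (hb : b ⬝ᵥ n = 0) :
    component (gradf n fun y => (Pm n * τ y) *ᵥ n) a b x = pdir b (component τ a n) x := by
  have hv (i : Fin 3) : DifferentiableAt ℝ (fun y => ((Pm n * τ y) *ᵥ n) i) x := by
    simp only [mulVec, dotProduct, mul_apply]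
    fun_prop
  have tangential : component τ a n = fun y => a ⬝ᵥ (Pm n * τ y) *ᵥ n := by
    funext y
    rw [← mulVec_mulVec, dotProduct_Pm_mulVec_of_orthogonal ha, component]
  rw [component, gradf, ← mulVec_mulVec, Pm_mulVec_of_orthogonal hb, vgrad_mulVec, tangential,
    pdir_dotProduct b a hv]

theorem component_tr2inc (hτ : ∀ i j, DifferentiableAt ℝ (fun y => τ y i j) x) {a b : V3}
    (ha : a ⬝ᵥ n = 0) (hb : b ⬝ᵥ n = 0) :
    component (tr2inc n τ) a b x =
      pdir b (component τ a n) x + pdir a (component τ b n) x - pdir n (component τ a b) x := by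
  have deformation : 2 * component (deff n fun y => (Pm n * τ y) *ᵥ n) a b x =
      pdir b (component τ a n) x + pdir a (component τ b n) x := by
    unfold deff
    rw [component_msym, component_gradf hτ ha hb, component_gradf hτ hb ha]
    ring
  have normal : a ⬝ᵥ (Pm n * pdirM n τ x * Pm n) *ᵥ b = pdir n (component τ a b) x := by
    rw [← mulVec_mulVec, Pm_mulVec_of_orthogonal hb, ← mulVec_mulVec,
      dotProduct_Pm_mulVec_of_orthogonal ha, pdir_component a b n hτ, component]
  rw [← deformation, ← normal, component, tr2inc, sub_mulVec, smul_mulVec, dotProduct_sub,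
    dotProduct_smul, smul_eq_mul, component]

theorem component_tr2cott (a b : V3) :
    component (tr2cott n τ) a b x =
      (component (tr2inc n τ) a (n ⨯₃ b) x + component (tr2inc n τ) b (n ⨯₃ a) x) / 2 := by
  unfold tr2cott
  rw [component_msym]
  simp only [component, mcrossv_mulVec]

namespace IsOrthonormalFrame

variable {t m : V3} (frame : IsOrthonormalFrame t m n)
  (hτ : ∀ i j, DifferentiableAt ℝ (fun y => τ y i j) x)
include frame hτ

theorem component_mcurl_t (a : V3) :
    component (mcurl τ) a t x = orientation t m n *
      (pdir m (component τ a n) x - pdir n (component τ a m) x) := by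
  rw [← component_mcurl a m n hτ, ← component_smul_right,
    ← frame.eq_orientation_smul_crossProduct_mn]

theorem component_mcurl_m (a : V3) :
    component (mcurl τ) a m x = orientation t m n *
      (pdir n (component τ a t) x - pdir t (component τ a n) x) := by
  rw [← component_mcurl a n t hτ, ← component_smul_right,
    ← frame.eq_orientation_smul_crossProduct_nt]

theorem component_tr2cott_tm :
    component (tr2cott n τ) t m x = component (fun y => msym (mcurl τ y)) m t x
      + orientation t m n / 2 * (pdir m (component τ m n) x - pdir t (component τ t n) x) := by
  rw [component_tr2cott, frame.crossProduct_nm, frame.crossProduct_nt, component_smul_right,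
    component_smul_right, component_tr2inc hτ frame.dot_tn frame.dot_tn,
    component_tr2inc hτ frame.dot_mn frame.dot_mn, component_msym, frame.component_mcurl_t hτ,
    frame.component_mcurl_m hτ]
  ring

theorem component_tr2cott_mm (hsym : ∀ y, (τ y)ᵀ = τ y) :
    component (tr2cott n τ) m m x = -component (mcurl τ) t t x
      - orientation t m n * pdir t (component τ m n) x := by
  rw [component_tr2cott, frame.crossProduct_nm, component_smul_right,
    component_tr2inc hτ frame.dot_mn frame.dot_tn, frame.component_mcurl_t hτ,
    component_comm_of_transpose_eq m t hsym]
  ring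

end IsOrthonormalFrame

end SurfaceTraces

section Regularity

/-- Entrywise `C^k` regularity of a matrix field; `SmoothM` is the case `k = ∞`. It is stated
entry by entry because matrices carry no global norm. -/
def EntrywiseContDiff (k : WithTop ℕ∞) (A : V3 → M3) : Prop :=
  ∀ i j, ContDiff ℝ k fun x => A x i j

namespace EntrywiseContDiff

variable {k : WithTop ℕ∞} {A : V3 → M3}

theorem differentiableAt (hA : EntrywiseContDiff k A) (hk : k ≠ 0) (x : V3) (i j : Fin 3) :
    DifferentiableAt ℝ (fun y => A y i j) x :=
  ((hA i j).differentiable hk) x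

theorem component (hA : EntrywiseContDiff k A) (a b : V3) :
    ContDiff ℝ k (component A a b) := by
  unfold _root_.component
  simp only [mulVec, dotProduct]
  exact ContDiff.sum fun i _ => contDiff_const.mul <|
    ContDiff.sum fun j _ => (hA i j).mul contDiff_const

theorem msym (hA : EntrywiseContDiff k A) : EntrywiseContDiff k fun x => msym (A x) :=
  fun i j => contDiff_const.mul ((hA i j).add (hA j i))

theorem const_mul (hA : EntrywiseContDiff k A) (B : M3) :
    EntrywiseContDiff k fun x => B * A x := by
  intro i j
  simp only [mul_apply]
  exact ContDiff.sum fun l _ => contDiff_const.mul (hA l j)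

theorem mul_const (hA : EntrywiseContDiff k A) (B : M3) :
    EntrywiseContDiff k fun x => A x * B := by
  intro i j
  simp only [mul_apply]
  exact ContDiff.sum fun l _ => (hA i l).mul contDiff_const

theorem mcrossv (hA : EntrywiseContDiff k A) (n : V3) :
    EntrywiseContDiff k fun x => mcrossv (A x) n :=
  fun i _ => ((hA i _).mul contDiff_const).sub ((hA i _).mul contDiff_const)

theorem mcurl (hA : EntrywiseContDiff (k + 1) A) : EntrywiseContDiff k (mcurl A) :=
  fun i _ => (contDiff_pdir _ (hA i _)).sub (contDiff_pdir _ (hA i _))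

theorem tr2inc (hA : EntrywiseContDiff (k + 1) A) (n : V3) : EntrywiseContDiff k (tr2inc n A) := by
  have hgrad : EntrywiseContDiff k (vgrad fun y => (Pm n * A y) *ᵥ n) := by
    refine fun i j => contDiff_pdir (Pi.single j 1) ?_
    simp only [mulVec, dotProduct]
    exact ContDiff.sum fun l _ => (hA.const_mul (Pm n) i l).mul contDiff_const
  have hnormal : EntrywiseContDiff k (pdirM n A) := fun i j => contDiff_pdir n (hA i j)
  exact fun i j => (contDiff_const.mul ((hgrad.mul_const (Pm n)).msym i j)).sub
    ((hnormal.const_mul (Pm n)).mul_const (Pm n) i j)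

theorem tr2cott (hA : EntrywiseContDiff (k + 1) A) (n : V3) : EntrywiseContDiff k (tr2cott n A) :=
  ((hA.tr2inc n).mcrossv n).msym

theorem differentiableAt_component (hA : EntrywiseContDiff k A) (hk : k ≠ 0) (a b x : V3) :
    DifferentiableAt ℝ (_root_.component A a b) x :=
  ((hA.component a b).differentiable hk) x

theorem differentiableAt_pdir_component (hA : EntrywiseContDiff 2 A) (w a b x : V3) :
    DifferentiableAt ℝ (pdir w (_root_.component A a b)) x :=
  ((contDiff_pdir (k := 1) w (hA.component a b)).differentiable one_ne_zero) x

end EntrywiseContDiff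

end Regularity

namespace IsOrthonormalFrame

variable {τ : V3 → M3} {t m n : V3} (frame : IsOrthonormalFrame t m n)
  (hτ : EntrywiseContDiff 2 τ)
include frame hτ

theorem pdir_component_tr2cott_tm (w x : V3) :
    pdir w (component (tr2cott n τ) t m) x =
      pdir w (component (fun y => msym (mcurl τ y)) m t) x
        + orientation t m n / 2 *
          (pdir w (pdir m (component τ m n)) x - pdir w (pdir t (component τ t n)) x) := by
  have hcurl := (EntrywiseContDiff.mcurl (k := 1) hτ).msym.differentiableAt_component
    one_ne_zero m t x
  have hm := hτ.differentiableAt_pdir_component m m n x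
  have ht := hτ.differentiableAt_pdir_component t t n x
  rw [funext (f := component (tr2cott n τ) t m) fun y =>
      frame.component_tr2cott_tm (hτ.differentiableAt two_ne_zero y),
    pdir_add w hcurl ((hm.fun_sub ht).const_mul _), pdir_const_mul w _ (hm.fun_sub ht),
    pdir_sub w hm ht]

theorem pdir_component_tr2cott_mm (hsym : ∀ y, (τ y)ᵀ = τ y) (w x : V3) :
    pdir w (component (tr2cott n τ) m m) x =
      -pdir w (component (mcurl τ) t t) x
        - orientation t m n * pdir w (pdir t (component τ m n)) x := by
  have hcurl := (EntrywiseContDiff.mcurl (k := 1) hτ).differentiableAt_component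
    one_ne_zero t t x
  have ht := hτ.differentiableAt_pdir_component t m n x
  rw [funext (f := component (tr2cott n τ) m m) fun y =>
      frame.component_tr2cott_mm (hτ.differentiableAt two_ne_zero y) hsym,
    pdir_sub w hcurl.fun_neg (ht.const_mul _), pdir_neg, pdir_const_mul w _ ht]

theorem pdir_pdir_crossProduct_nm (u w x : V3) :
    pdir u (pdir w fun y => (n ⨯₃ m) ⬝ᵥ τ y *ᵥ n) x =
      -orientation t m n * pdir u (pdir w (component τ t n)) x := by
  have inner (y : V3) : pdir w (fun z => (n ⨯₃ m) ⬝ᵥ τ z *ᵥ n) y =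
      -orientation t m n * pdir w (component τ t n) y := by
    rw [← pdir_const_mul w _ (hτ.differentiableAt_component two_ne_zero t n y)]
    simp only [frame.crossProduct_nm, smul_dotProduct, smul_eq_mul, component]
  rw [funext inner, pdir_const_mul u _ (hτ.differentiableAt_pdir_component w t n x)]

end IsOrthonormalFrame

theorem edge_trace_tr2cott_divf_general (τ : V3 → M3) (hτ : EntrywiseContDiff 2 τ)
    (hsym : ∀ x, (τ x)ᵀ = τ x) {t m n : V3} (frame : IsOrthonormalFrame t m n) (x : V3) :
    pdir t (fun y => dotp t ((tr2cott n τ y).mulVec m)) x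
        + dotp m (divfM t m (tr2cott n τ) x) =
      dotp m (tre2 t τ x)
        + pdir t (pdir t fun y => dotp (cross n m) ((τ y).mulVec n)) x := by
  have hcott := (EntrywiseContDiff.tr2cott (k := 1) hτ n).differentiableAt one_ne_zero x
  have hcurl := (EntrywiseContDiff.mcurl (k := 1) hτ).msym.differentiableAt one_ne_zero x
  have cott_mt : component (tr2cott n τ) m t = component (tr2cott n τ) t m :=
    component_comm_of_transpose_eq m t fun _ => transpose_msym _
  have mixed := pdir_comm m t (hτ.component m n).contDiffAt (x := x)
  change pdir t (component (tr2cott n τ) t m) x + m ⬝ᵥ divfM t m (tr2cott n τ) x =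
    m ⬝ᵥ tre2 t τ x + pdir t (pdir t fun y => cross n m ⬝ᵥ τ y *ᵥ n) x
  rw [cross_eq_crossProduct, dotProduct_divfM m t m hcott, dotProduct_tre2 m t hcurl, cott_mt,
    frame.pdir_component_tr2cott_tm hτ, frame.pdir_component_tr2cott_mm hτ hsym,
    frame.pdir_pdir_crossProduct_nm hτ, mixed]
  ring

/-- edge trace identity
∂_t(tᵀ(tr2cott τ)m) + mᵀ div_f(tr2cott τ) = m·tre2(τ) + ∂_t∂_t(t'ᵀτn). -/
theorem edge_trace_tr2cott_divf (τ : V3 → M3) (hτ : SmoothM τ) (hsym : ∀ x, (τ x)ᵀ = τ x)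
    (t m n : V3)
    (ht : dotp t t = 1) (hm : dotp m m = 1) (hn : dotp n n = 1)
    (htm : dotp t m = 0) (htn : dotp t n = 0) (hmn : dotp m n = 0) :
    ∀ x, pdir t (fun y => dotp t ((tr2cott n τ y).mulVec m)) x
        + dotp m (divfM t m (tr2cott n τ) x) =
      dotp m (tre2 t τ x)
        + pdir t (pdir t fun y => dotp (cross n m) ((τ y).mulVec n)) x :=
  edge_trace_tr2cott_divf_general τ
    (fun i j => (hτ i j).of_le (WithTop.coe_le_coe.mpr le_top)) hsym ⟨ht, hm, hn, htm, htn, hmn⟩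

end
end

section
/- Exactness of the polynomial conformal Hessian complex at the div div stage: let k be a natural number. A matrix field τ ∈ P_k(S∩T) satisfies div(div τ) = 0 identically on ℝ³ if and only if there exists σ ∈ P_{k+1}(S∩T) with τ = sym(curl σ). -/
noncomputable section

open Matrix

/-!
The equivalence already holds for formal polynomials over a `ℚ`-algebra. By Euler's identity a
divergence-free homogeneous field `v` of degree `n` satisfies `curl (v × x) = (n + 2) v`, so
divergence-free polynomial fields are curls of fields of one degree more. Now let `A` be symmetric
and traceless with `div div A = 0`. Then `div A = curl w`, so the rows of `A + crossMatrix w` are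
divergence-free and `A + crossMatrix w = curl C`. Comparing traces, the axial vector of `C` is
divergence-free, hence equal to some `curl v`, the axial vector of `grad v`. So `C - grad v` is
symmetric with the same curl as `C`, and the symmetric part of that curl is `A`. Removing the trace
of `C - grad v` changes its curl by a skew matrix only.
-/

open MvPolynomial

section FormalPolynomials

variable {σ R : Type*} [CommSemiring R]

lemma pderiv_pderiv_comm (i j : σ) (p : MvPolynomial σ R) :
    pderiv i (pderiv j p) = pderiv j (pderiv i p) := by
  classical
  ext d
  simp only [coeff_pderiv, Finsupp.add_apply, Finsupp.single_apply, add_right_comm d,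
    eq_comm (a := i)]
  split_ifs with h
  · rw [h]
  · simp [mul_right_comm]

lemma pderiv_homogeneousComponent (n : ℕ) (i : σ) (p : MvPolynomial σ R) :
    pderiv i (homogeneousComponent (n + 1) p) = homogeneousComponent n (pderiv i p) := by
  ext d
  simp [coeff_pderiv, coeff_homogeneousComponent]

lemma sum_homogeneousComponent_of_mem_restrictTotalDegree {m : ℕ} {p : MvPolynomial σ R}
    (hp : p ∈ restrictTotalDegree σ R m) :
    ∑ n ∈ Finset.range (m + 1), homogeneousComponent n p = p := by
  rw [mem_restrictTotalDegree] at hp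
  conv_rhs => rw [← sum_homogeneousComponent p]
  refine (Finset.sum_subset (Finset.range_subset_range.2 (by lia)) fun n _ hn => ?_).symm
  exact homogeneousComponent_eq_zero n p (by simpa using hn)

lemma pderiv_mem_restrictTotalDegree {m : ℕ} {p : MvPolynomial σ R}
    (hp : p ∈ restrictTotalDegree σ R (m + 1)) (i : σ) :
    pderiv i p ∈ restrictTotalDegree σ R m := by
  rw [mem_restrictTotalDegree] at hp ⊢
  refine Finset.sup_le fun d hd => ?_
  have hd' : d + Finsupp.single i 1 ∈ p.support := by
    rw [mem_support_iff, coeff_pderiv] at hd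
    exact mem_support_iff.mpr (left_ne_zero_of_mul hd)
  have hdeg := (le_totalDegree hd').trans hp
  rw [Finsupp.sum_add_index' (fun _ => rfl) fun _ _ _ => rfl, Finsupp.sum_single_index rfl] at hdeg
  exact Nat.le_of_succ_le_succ hdeg

lemma pderiv_eq_zero_of_mem_restrictTotalDegree_zero {p : MvPolynomial σ R}
    (hp : p ∈ restrictTotalDegree σ R 0) (i : σ) : pderiv i p = 0 := by
  rw [mem_restrictTotalDegree, Nat.le_zero, totalDegree_eq_zero_iff_eq_C] at hp
  rw [hp, pderiv_C]

/-- The Jacobian of a polynomial vector field, with the gradients of the components as rows. -/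
def jacobian {m : Type*} (v : m → MvPolynomial σ R) : Matrix m σ (MvPolynomial σ R) :=
  Matrix.of fun i j => pderiv j (v i)

end FormalPolynomials

section SkewMatrices

variable {S : Type*} [AddCommGroup S]

/-- The skew matrix with axial vector `w`; over a commutative ring, the matrix of `y ↦ w ⨯₃ y`. -/
def crossMatrix (w : Fin 3 → S) : Matrix (Fin 3) (Fin 3) S :=
  !![0, -w 2, w 1; w 2, 0, -w 0; -w 1, w 0, 0]

/-- The axial vector of `A - Aᵀ`, without the customary factor `1 / 2`; indices are modulo 3. -/
def axialVector (A : Matrix (Fin 3) (Fin 3) S) : Fin 3 → S :=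
  fun i => A (i + 2) (i + 1) - A (i + 1) (i + 2)

lemma transpose_crossMatrix (w : Fin 3 → S) : (crossMatrix w)ᵀ = -crossMatrix w := by
  ext i j
  fin_cases i <;> fin_cases j <;> simp [crossMatrix]

lemma trace_crossMatrix (w : Fin 3 → S) : (crossMatrix w).trace = 0 := by
  simp [crossMatrix, trace_fin_three]

lemma crossMatrix_mem {M : Type*} [SetLike M S] [AddSubgroupClass M S] {s : M} {w : Fin 3 → S}
    (hw : ∀ i, w i ∈ s) (i j : Fin 3) : crossMatrix w i j ∈ s := by
  fin_cases i <;> fin_cases j <;> simp [crossMatrix, hw]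

lemma axialVector_sub (A B : Matrix (Fin 3) (Fin 3) S) :
    axialVector (A - B) = axialVector A - axialVector B :=
  funext fun _ => sub_sub_sub_comm _ _ _ _

lemma isSymm_iff_axialVector_eq_zero {A : Matrix (Fin 3) (Fin 3) S} :
    A.IsSymm ↔ axialVector A = 0 := by
  simp only [IsSymm.ext_iff, axialVector, funext_iff, Fin.forall_fin_succ, IsEmpty.forall_iff,
    Fin.isValue, Fin.succ_zero_eq_one, Fin.succ_one_eq_two, Fin.reduceAdd, zero_add, Pi.zero_apply,
    sub_eq_zero, and_true, true_and]
  grind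

end SkewMatrices

section Divergence

variable {σ R : Type*} [CommSemiring R] [Fintype σ]

/-- The divergence of a polynomial vector field. -/
def polyDiv : (σ → MvPolynomial σ R) →ₗ[R] MvPolynomial σ R where
  toFun v := ∑ i, pderiv i (v i)
  map_add' := by simp [Finset.sum_add_distrib]
  map_smul' := by simp [Finset.smul_sum]

/-- The divergence of each row of a polynomial matrix field. -/
def rowDiv {m : Type*} : Matrix m σ (MvPolynomial σ R) →ₗ[R] m → MvPolynomial σ R where
  toFun A i := polyDiv (A i)
  map_add' A B := by ext1 i; exact map_add polyDiv (A i) (B i)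
  map_smul' c A := by ext1 i; exact map_smul polyDiv c (A i)

lemma polyDiv_apply (v : σ → MvPolynomial σ R) : polyDiv v = ∑ i, pderiv i (v i) := rfl

lemma rowDiv_apply {m : Type*} (A : Matrix m σ (MvPolynomial σ R)) (i : m) :
    rowDiv A i = ∑ j, pderiv j (A i j) := rfl

lemma polyDiv_rowDiv_transpose (A : Matrix σ σ (MvPolynomial σ R)) :
    polyDiv (rowDiv Aᵀ) = polyDiv (rowDiv A) := by
  simp only [polyDiv_apply, rowDiv_apply, map_sum, transpose_apply]
  rw [Finset.sum_comm]
  simp only [pderiv_pderiv_comm]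

lemma polyDiv_homogeneousComponent {v : σ → MvPolynomial σ R} (h : polyDiv v = 0) (n : ℕ) :
    polyDiv (fun i => homogeneousComponent n (v i)) = 0 := by
  cases n with
  | zero => simp [polyDiv_apply]
  | succ n =>
    rw [polyDiv_apply] at h ⊢
    simp only [pderiv_homogeneousComponent, ← map_sum, h, map_zero]

end Divergence

section Curl

variable {R : Type*} [CommRing R]

/-- The curl of a polynomial vector field in three variables; indices are modulo 3. -/
def polyCurl : (Fin 3 → MvPolynomial (Fin 3) R) →ₗ[R] Fin 3 → MvPolynomial (Fin 3) R where
  toFun v i := pderiv (i + 1) (v (i + 2)) - pderiv (i + 2) (v (i + 1))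
  map_add' v w := by ext1 i; simp [add_sub_add_comm]
  map_smul' c v := by ext1 i; simp [smul_sub]

/-- The curl of each row of a polynomial matrix field. -/
def rowCurl {m : Type*} :
    Matrix m (Fin 3) (MvPolynomial (Fin 3) R) →ₗ[R] Matrix m (Fin 3) (MvPolynomial (Fin 3) R) where
  toFun A := Matrix.of fun i => polyCurl (A i)
  map_add' A B := by ext1 i j; exact congrFun (map_add polyCurl (A i) (B i)) j
  map_smul' c A := by ext1 i j; exact congrFun (map_smul polyCurl c (A i)) j

lemma polyCurl_apply (v : Fin 3 → MvPolynomial (Fin 3) R) (i : Fin 3) :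
    polyCurl v i = pderiv (i + 1) (v (i + 2)) - pderiv (i + 2) (v (i + 1)) := rfl

lemma rowCurl_apply {m : Type*} (A : Matrix m (Fin 3) (MvPolynomial (Fin 3) R)) (i : m)
    (j : Fin 3) :
    rowCurl A i j = pderiv (j + 1) (A i (j + 2)) - pderiv (j + 2) (A i (j + 1)) := rfl

lemma polyDiv_polyCurl (v : Fin 3 → MvPolynomial (Fin 3) R) : polyDiv (polyCurl v) = 0 := by
  simp only [polyDiv_apply, polyCurl_apply, Fin.sum_univ_three, map_sub, Fin.isValue,
    Fin.reduceAdd, zero_add, pderiv_pderiv_comm (1 : Fin 3) 0, pderiv_pderiv_comm (2 : Fin 3)]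
  ring

lemma rowDiv_rowCurl {m : Type*} (A : Matrix m (Fin 3) (MvPolynomial (Fin 3) R)) :
    rowDiv (rowCurl A) = 0 :=
  funext fun i => polyDiv_polyCurl (A i)

lemma rowCurl_jacobian {m : Type*} (v : m → MvPolynomial (Fin 3) R) : rowCurl (jacobian v) = 0 :=
  Matrix.ext fun _ _ => sub_eq_zero.2 (pderiv_pderiv_comm _ _ _)

lemma rowDiv_crossMatrix (w : Fin 3 → MvPolynomial (Fin 3) R) :
    rowDiv (crossMatrix w) = -polyCurl w := by
  ext1 i
  rw [rowDiv_apply, Fin.sum_univ_three, Pi.neg_apply, polyCurl_apply]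
  fin_cases i <;> simp [crossMatrix, sub_eq_add_neg, add_comm]

lemma axialVector_jacobian (v : Fin 3 → MvPolynomial (Fin 3) R) :
    axialVector (jacobian v) = polyCurl v := rfl

lemma trace_rowCurl (A : Matrix (Fin 3) (Fin 3) (MvPolynomial (Fin 3) R)) :
    (rowCurl A).trace = polyDiv (axialVector A) := by
  simp only [trace_fin_three, rowCurl_apply, polyDiv_apply, axialVector, Fin.sum_univ_three,
    map_sub, Fin.isValue, Fin.reduceAdd, zero_add]
  ring

lemma rowCurl_smul_one (q : MvPolynomial (Fin 3) R) :
    rowCurl (q • (1 : Matrix (Fin 3) (Fin 3) (MvPolynomial (Fin 3) R))) =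
      -crossMatrix fun i => pderiv i q := by
  ext1 i j
  fin_cases i <;> fin_cases j <;> simp [rowCurl_apply, crossMatrix]

lemma rowCurl_sub_smul_one_add_transpose (B : Matrix (Fin 3) (Fin 3) (MvPolynomial (Fin 3) R))
    (q : MvPolynomial (Fin 3) R) :
    rowCurl (B - q • 1) + (rowCurl (B - q • 1))ᵀ = rowCurl B + (rowCurl B)ᵀ := by
  rw [map_sub, rowCurl_smul_one, sub_neg_eq_add, transpose_add, transpose_crossMatrix]
  abel

end Curl

section CurlExactness

variable {R : Type*} [CommRing R]

lemma isHomogeneous_cross {m n : ℕ} {v w : Fin 3 → MvPolynomial (Fin 3) R}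
    (hv : ∀ i, (v i).IsHomogeneous m) (hw : ∀ i, (w i).IsHomogeneous n) (i : Fin 3) :
    ((v ⨯₃ w) i).IsHomogeneous (m + n) := by
  fin_cases i <;> exact ((hv _).mul (hw _)).sub ((hv _).mul (hw _))

lemma polyCurl_cross_X (v : Fin 3 → MvPolynomial (Fin 3) R) (i : Fin 3) :
    polyCurl (v ⨯₃ X) i = 2 * v i + ∑ j, X j * pderiv j (v i) - polyDiv v * X i := by
  simp only [polyCurl_apply, polyDiv_apply, Fin.sum_univ_three]
  fin_cases i <;> simp [cross_apply, pderiv_X, Derivation.leibniz] <;> ring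

lemma polyCurl_cross_X_of_isHomogeneous {n : ℕ} {v : Fin 3 → MvPolynomial (Fin 3) R}
    (hv : ∀ i, (v i).IsHomogeneous n) (hdiv : polyDiv v = 0) :
    polyCurl (v ⨯₃ X) = (n + 2) • v := by
  ext1 i
  simp [polyCurl_cross_X, (hv i).sum_X_mul_pderiv, hdiv, add_smul, add_comm]

variable [Algebra ℚ R]

theorem exists_polyCurl_eq {m : ℕ} {v : Fin 3 → MvPolynomial (Fin 3) R}
    (hv : ∀ i, v i ∈ restrictTotalDegree (Fin 3) R m) (hdiv : polyDiv v = 0) :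
    ∃ w, (∀ i, w i ∈ restrictTotalDegree (Fin 3) R (m + 1)) ∧ polyCurl w = v := by
  let u : ℕ → Fin 3 → MvPolynomial (Fin 3) R := fun n i => homogeneousComponent n (v i)
  have hu (n : ℕ) (i : Fin 3) : (u n i).IsHomogeneous n :=
    homogeneousComponent_isHomogeneous n (v i)
  have hsum : ∑ n ∈ Finset.range (m + 1), u n = v := by
    ext1 i
    rw [Finset.sum_apply, sum_homogeneousComponent_of_mem_restrictTotalDegree (hv i)]
  have hcurl (n : ℕ) : polyCurl (u n ⨯₃ X) = (n + 2) • u n :=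
    polyCurl_cross_X_of_isHomogeneous (hu n) (polyDiv_homogeneousComponent hdiv n)
  refine ⟨∑ n ∈ Finset.range (m + 1), ((n + 2 : ℕ) : ℚ)⁻¹ • (u n ⨯₃ X), fun i => ?_, ?_⟩
  · rw [Finset.sum_apply]
    refine sum_mem fun n hn => ?_
    have hdeg : (u n ⨯₃ X) i ∈ restrictTotalDegree (Fin 3) R (m + 1) :=
      (mem_restrictTotalDegree _ _ _).2 <|
        (isHomogeneous_cross (hu n) (isHomogeneous_X R) i).totalDegree_le.trans
          (Finset.mem_range.1 hn)
    rw [Pi.smul_apply]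
    exact Submodule.smul_of_tower_mem _ _ hdeg
  · have hne (n : ℕ) : ((n + 2 : ℕ) : ℚ) ≠ 0 := by positivity
    simp only [map_sum, map_rat_smul, hcurl, ← Nat.cast_smul_eq_nsmul ℚ,
      inv_smul_smul₀ (hne _), hsum]

theorem exists_rowCurl_eq {m : ℕ} {ι : Type*} {A : Matrix ι (Fin 3) (MvPolynomial (Fin 3) R)}
    (hA : ∀ i j, A i j ∈ restrictTotalDegree (Fin 3) R m) (hdiv : rowDiv A = 0) :
    ∃ B, (∀ i j, B i j ∈ restrictTotalDegree (Fin 3) R (m + 1)) ∧ rowCurl B = A := by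
  choose B hB hBA using fun i => exists_polyCurl_eq (hA i) (congrFun hdiv i)
  exact ⟨of B, hB, Matrix.ext fun i j => congrFun (hBA i) j⟩

lemma exists_polyCurl_eq_rowDiv {k : ℕ} {A : Matrix (Fin 3) (Fin 3) (MvPolynomial (Fin 3) R)}
    (hA : ∀ i j, A i j ∈ restrictTotalDegree (Fin 3) R k) (hdiv : polyDiv (rowDiv A) = 0) :
    ∃ w, (∀ i, w i ∈ restrictTotalDegree (Fin 3) R k) ∧ polyCurl w = rowDiv A := by
  cases k with
  | zero =>
    refine ⟨0, fun _ => zero_mem _, ?_⟩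
    ext1 i
    simp [rowDiv_apply, pderiv_eq_zero_of_mem_restrictTotalDegree_zero (hA i _)]
  | succ k =>
    exact exists_polyCurl_eq
      (fun i => sum_mem fun j _ => pderiv_mem_restrictTotalDegree (hA i j) j) hdiv

end CurlExactness

section SymmetricTraceless

/-- The space `P_k(S ∩ T)`, for matrices of formal polynomials. -/
structure IsSymmTracelessOfDegreeLE {ι σ R : Type*} [Fintype ι] [CommSemiring R] (k : ℕ)
    (A : Matrix ι ι (MvPolynomial σ R)) : Prop where
  mem_restrictTotalDegree : ∀ i j, A i j ∈ restrictTotalDegree σ R k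
  isSymm : A.IsSymm
  trace_eq_zero : A.trace = 0

variable {R : Type*} [CommRing R] [Algebra ℚ R]

lemma exists_isSymm_rowCurl_add_transpose_eq {k : ℕ}
    {A : Matrix (Fin 3) (Fin 3) (MvPolynomial (Fin 3) R)} (hA : IsSymmTracelessOfDegreeLE k A)
    (hdiv : polyDiv (rowDiv A) = 0) :
    ∃ B : Matrix (Fin 3) (Fin 3) (MvPolynomial (Fin 3) R),
      (∀ i j, B i j ∈ restrictTotalDegree (Fin 3) R (k + 1)) ∧ B.IsSymm ∧
        rowCurl B + (rowCurl B)ᵀ = 2 • A := by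
  obtain ⟨hdeg, hsymm, htrace⟩ := hA
  obtain ⟨w, hw, hwA⟩ := exists_polyCurl_eq_rowDiv hdeg hdiv
  obtain ⟨C, hC, hCA⟩ : ∃ C, (∀ i j, C i j ∈ restrictTotalDegree (Fin 3) R (k + 1)) ∧
      rowCurl C = A + crossMatrix w :=
    exists_rowCurl_eq (A := A + crossMatrix w)
      (fun i j => add_mem (hdeg i j) (crossMatrix_mem hw i j))
      (by rw [map_add, rowDiv_crossMatrix, hwA, add_neg_cancel])
  obtain ⟨v, hv, hvC⟩ : ∃ v, (∀ i, v i ∈ restrictTotalDegree (Fin 3) R (k + 2)) ∧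
      polyCurl v = axialVector C :=
    exists_polyCurl_eq (v := axialVector C) (fun i => sub_mem (hC _ _) (hC _ _))
      (by rw [← trace_rowCurl, hCA, trace_add, htrace, trace_crossMatrix, add_zero])
  refine ⟨C - jacobian v,
    fun i j => sub_mem (hC i j) (pderiv_mem_restrictTotalDegree (hv i) j), ?_, ?_⟩
  · rw [isSymm_iff_axialVector_eq_zero, axialVector_sub, axialVector_jacobian, hvC, sub_self]
  · rw [map_sub, rowCurl_jacobian, sub_zero, hCA, transpose_add, hsymm.eq, transpose_crossMatrix]
    abel

lemma exists_isSymmTraceless_sub_smul_one {ι σ : Type*} [Fintype ι] [Nonempty ι] [DecidableEq ι]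
    {k : ℕ} {A : Matrix ι ι (MvPolynomial σ R)} (hA : ∀ i j, A i j ∈ restrictTotalDegree σ R k)
    (hsymm : A.IsSymm) :
    ∃ q : MvPolynomial σ R, IsSymmTracelessOfDegreeLE k (A - q • 1) := by
  let q : MvPolynomial σ R := (Fintype.card ι : ℚ)⁻¹ • A.trace
  have hq : q ∈ restrictTotalDegree σ R k :=
    Submodule.smul_of_tower_mem _ _ (sum_mem fun i _ => hA i i)
  refine ⟨q, fun i j => sub_mem (hA i j) ?_, hsymm.sub (isSymm_one.smul q), ?_⟩
  · by_cases h : i = j <;> simp [h, hq]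
  · have hcard : (Fintype.card ι : ℚ) ≠ 0 := by simp
    rw [trace_sub, trace_smul, trace_one, smul_eq_mul, mul_comm, ← nsmul_eq_mul,
      ← Nat.cast_smul_eq_nsmul ℚ, smul_inv_smul₀ hcard, sub_self]

lemma polyDiv_rowDiv_eq_zero_of_rowCurl_add_transpose_eq
    {A B : Matrix (Fin 3) (Fin 3) (MvPolynomial (Fin 3) R)}
    (h : rowCurl B + (rowCurl B)ᵀ = 2 • A) : polyDiv (rowDiv A) = 0 := by
  have htwice : (2 : ℕ) • polyDiv (rowDiv A) = 0 := by
    rw [← map_nsmul, ← map_nsmul, ← h, map_add, map_add, polyDiv_rowDiv_transpose,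
      rowDiv_rowCurl, map_zero, add_zero]
  rw [← Nat.cast_smul_eq_nsmul ℚ] at htwice
  exact (smul_eq_zero_iff_right two_ne_zero).1 htwice

theorem poly_conformal_hessian_exact_divdiv_general {k : ℕ}
    {A : Matrix (Fin 3) (Fin 3) (MvPolynomial (Fin 3) R)} (hA : IsSymmTracelessOfDegreeLE k A) :
    polyDiv (rowDiv A) = 0 ↔
      ∃ B, IsSymmTracelessOfDegreeLE (k + 1) B ∧ rowCurl B + (rowCurl B)ᵀ = 2 • A := by
  refine ⟨fun hdiv => ?_, fun ⟨B, _, hB⟩ => polyDiv_rowDiv_eq_zero_of_rowCurl_add_transpose_eq hB⟩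
  obtain ⟨B, hdeg, hsymm, hBA⟩ := exists_isSymm_rowCurl_add_transpose_eq hA hdiv
  obtain ⟨q, hq⟩ := exists_isSymmTraceless_sub_smul_one hdeg hsymm
  exact ⟨B - q • 1, hq, by rw [rowCurl_sub_smul_one_add_transpose, hBA]⟩

end SymmetricTraceless

section Evaluation

lemma hasFDerivAt_eval {σ 𝕜 : Type*} [NontriviallyNormedField 𝕜] [Fintype σ]
    (p : MvPolynomial σ 𝕜) (x : σ → 𝕜) :
    HasFDerivAt (fun y => eval y p)
      (∑ i, eval x (pderiv i p) • (ContinuousLinearMap.proj i : (σ → 𝕜) →L[𝕜] 𝕜)) x := by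
  classical
  induction p using MvPolynomial.induction_on with
  | C a =>
    simp only [eval_C, pderiv_C, map_zero]
    refine (hasFDerivAt_const (𝕜 := 𝕜) a x).congr_fderiv ?_
    ext
    simp
  | add p q hp hq =>
    simp only [map_add]
    refine (hp.add hq).congr_fderiv ?_
    ext
    simp [add_mul, Finset.sum_add_distrib]
  | mul_X p n hp =>
    simp only [map_mul, eval_X]
    refine (hp.mul (hasFDerivAt_apply n x)).congr_fderiv ?_
    ext
    simp [pderiv_X, Pi.single_apply, apply_ite, add_mul, Finset.sum_add_distrib, Finset.mul_sum,
      mul_assoc]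

/-- The matrix-valued polynomial function given by a matrix of formal polynomials. -/
def evalMatrix {m n σ R : Type*} [CommSemiring R] (A : Matrix m n (MvPolynomial σ R)) (x : σ → R) :
    Matrix m n R :=
  A.map (eval x)

lemma evalMatrix_injective {m n σ R : Type*} [CommRing R] [IsDomain R] [Infinite R] :
    Function.Injective (evalMatrix : Matrix m n (MvPolynomial σ R) → (σ → R) → Matrix m n R) := by
  intro A B h
  ext1 i j
  exact MvPolynomial.funext fun x => congrFun (congrFun (congrFun h x) i) j

lemma polyLeST_iff_exists_evalMatrix {k : ℕ} {τ : V3 → M3} :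
    PolyLeST k τ ↔ ∃ A, IsSymmTracelessOfDegreeLE k A ∧ evalMatrix A = τ := by
  constructor
  · rintro ⟨hpoly, hsymm, htrace⟩
    choose A hdeg hA using hpoly
    obtain rfl : evalMatrix A = τ := funext fun x => Matrix.ext fun i j => (hA i j x).symm
    refine ⟨A, ⟨fun i j => (mem_restrictTotalDegree _ _ _).2 (hdeg i j), ?_, ?_⟩, rfl⟩
    · exact evalMatrix_injective (funext hsymm)
    · refine MvPolynomial.funext fun x => ?_
      rw [map_zero, ← htrace x]
      exact AddMonoidHom.map_trace (eval x) A
  · rintro ⟨A, ⟨hdeg, hsymm, htrace⟩, rfl⟩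
    refine ⟨fun i j => ⟨A i j, (mem_restrictTotalDegree _ _ _).1 (hdeg i j), fun _ => rfl⟩,
      fun x => hsymm.map (eval x), fun x => ?_⟩
    rw [evalMatrix, ← AddMonoidHom.map_trace, htrace, map_zero]

lemma pd_eval (i : Fin 3) (p : MvPolynomial (Fin 3) ℝ) :
    pd i (fun x => eval x p) = fun x => eval x (pderiv i p) := by
  ext x
  simp [pd, (hasFDerivAt_eval p x).fderiv, Pi.single_apply]

lemma vdiv_mdiv_evalMatrix (A : Matrix (Fin 3) (Fin 3) (MvPolynomial (Fin 3) ℝ)) (x : V3) :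
    vdiv (mdiv (evalMatrix A)) x = eval x (polyDiv (rowDiv A)) := by
  simp only [vdiv, mdiv, evalMatrix, map_apply, pd_eval, ← map_sum, polyDiv_apply, rowDiv_apply]

lemma mcurl_evalMatrix (A : Matrix (Fin 3) (Fin 3) (MvPolynomial (Fin 3) ℝ)) :
    mcurl (evalMatrix A) = evalMatrix (rowCurl A) := by
  ext x i j
  simp only [mcurl, evalMatrix, of_apply, map_apply, pd_eval, rowCurl_apply, map_sub]

lemma forall_vdiv_mdiv_evalMatrix_eq_zero_iff
    {A : Matrix (Fin 3) (Fin 3) (MvPolynomial (Fin 3) ℝ)} :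
    (∀ x, vdiv (mdiv (evalMatrix A)) x = 0) ↔ polyDiv (rowDiv A) = 0 := by
  simp only [vdiv_mdiv_evalMatrix, MvPolynomial.funext_iff, map_zero]

lemma forall_evalMatrix_eq_msym_mcurl_iff
    {A B : Matrix (Fin 3) (Fin 3) (MvPolynomial (Fin 3) ℝ)} :
    (∀ x, evalMatrix A x = msym (mcurl (evalMatrix B) x)) ↔
      rowCurl B + (rowCurl B)ᵀ = 2 • A := by
  have hsym (x : V3) : evalMatrix (rowCurl B + (rowCurl B)ᵀ) x =
      evalMatrix (rowCurl B) x + (evalMatrix (rowCurl B) x)ᵀ := by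
    ext i j
    simp [evalMatrix]
  have htwo (x : V3) : evalMatrix (2 • A) x = (2 : ℝ) • evalMatrix A x := by
    ext i j
    simp only [evalMatrix, two_smul, map_apply, Matrix.add_apply, map_add]
  simp only [mcurl_evalMatrix, msym, one_div, eq_inv_smul_iff₀ (two_ne_zero' ℝ),
    ← evalMatrix_injective.eq_iff (a := _ + _), funext_iff (α := V3), hsym, htwo, eq_comm]

end Evaluation

/-- exactness of the polynomial conformal Hessian complex at the div div stage. -/
theorem poly_conformal_hessian_exact_divdiv (k : ℕ) (τ : V3 → M3) (hτ : PolyLeST k τ) :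
    (∀ x, vdiv (mdiv τ) x = 0) ↔
      ∃ σ : V3 → M3, PolyLeST (k + 1) σ ∧ ∀ x, τ x = msym (mcurl σ x) := by
  obtain ⟨A, hA, rfl⟩ := polyLeST_iff_exists_evalMatrix.1 hτ
  simp only [forall_vdiv_mdiv_evalMatrix_eq_zero_iff, polyLeST_iff_exists_evalMatrix,
    exists_exists_and_eq_and, forall_evalMatrix_eq_msym_mcurl_iff,
    poly_conformal_hessian_exact_divdiv_general hA]

end
end
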